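/- Let 𝒞 ⊆ 𝒟 ⊆ 𝕄 be sum-rank metric codes with 𝒞 nonzero and assume that 𝒟 is an MSRD code. Then the sequence (d_1(𝒞), ..., d_{dim 𝒞}(𝒞)) of generalized sum-rank weights of 𝒞 is a subsequence of the sequence (d_1(𝒟), ..., d_{dim 𝒟}(𝒟)) of generalized sum-rank weights of 𝒟. -/

import Mathlib

open Module

variable {F : Type*} [Field F] [Fintype F] {t : ℕ} {m n : Fin t → ℕ}

/-- The sum-rank weight of an element of `𝕄 = F^{m 0 × n 0} × ⋯ × F^{m (t-1) × n (t-1)}`. -/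
noncomputable def srk (C : ∀ i : Fin t, Matrix (Fin (m i)) (Fin (n i)) F) : ℕ :=
  ∑ i, (C i).rank

/-- The maximum sum-rank of a code. -/
noncomputable def maxsrk (𝒞 : Submodule F (∀ i : Fin t, Matrix (Fin (m i)) (Fin (n i)) F)) : ℕ :=
  sSup {w | ∃ C ∈ 𝒞, srk C = w}

/-- The minimum distance of a code. -/
noncomputable def minDist (𝒞 : Submodule F (∀ i : Fin t, Matrix (Fin (m i)) (Fin (n i)) F)) : ℕ :=
  sInf {w | ∃ C ∈ 𝒞, C ≠ 0 ∧ srk C = w}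

/-- The maximum rank of a subspace of a matrix space. -/
noncomputable def maxrank {a b : ℕ} (𝒜 : Submodule F (Matrix (Fin a) (Fin b) F)) : ℕ :=
  sSup {w | ∃ A ∈ 𝒜, A.rank = w}

/-- Optimal anticodes in a single matrix space. -/
def IsOptAnticode {a b : ℕ} (𝒜 : Submodule F (Matrix (Fin a) (Fin b) F)) : Prop :=
  Module.finrank F 𝒜 = a * maxrank 𝒜

/-- The weight of a sum-rank metric code: the minimum of `maxsrk` over products of
optimal anticodes containing it. -/
noncomputable def codeWt (𝒞 : Submodule F (∀ i : Fin t, Matrix (Fin (m i)) (Fin (n i)) F)) : ℕ :=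
  sInf {w | ∃ 𝒜 : ∀ i : Fin t, Submodule F (Matrix (Fin (m i)) (Fin (n i)) F),
    (∀ i, IsOptAnticode (𝒜 i)) ∧ 𝒞 ≤ Submodule.pi Set.univ 𝒜 ∧
      maxsrk (Submodule.pi Set.univ 𝒜) = w}

/-- The `r`-th generalized sum-rank weight of a code. -/
noncomputable def gw (𝒞 : Submodule F (∀ i : Fin t, Matrix (Fin (m i)) (Fin (n i)) F))
    (r : ℕ) : ℕ :=
  sInf {w | ∃ 𝒟 : Submodule F (∀ i : Fin t, Matrix (Fin (m i)) (Fin (n i)) F),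
    𝒟 ≤ 𝒞 ∧ r ≤ Module.finrank F 𝒟 ∧ codeWt 𝒟 = w}

/-- Maximum sum-rank distance (MSRD) codes. -/
def IsMSRD (𝒞 : Submodule F (∀ i : Fin t, Matrix (Fin (m i)) (Fin (n i)) F)) : Prop :=
  ∃ j : Fin t, ∃ δ : ℕ, δ + 1 ≤ n j ∧
    minDist 𝒞 = ∑ i ∈ Finset.Iio j, n i + δ + 1 ∧
    Module.finrank F 𝒞 + δ * m j = ∑ i ∈ Finset.Ici j, m i * n i

/-- `d` is a subsequence of `e`. -/
def IsSubseq {k K : ℕ} (d : Fin k → ℕ) (e : Fin K → ℕ) : Prop :=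
  ∃ φ : Fin k → Fin K, StrictMono φ ∧ ∀ r, d r = e (φ r)

section Block
open Matrix
set_option linter.unusedSectionVars false
variable {E : Type*} [Field E] {ι κ l : Type*} [Fintype ι] [Fintype κ] [Fintype l]
  [DecidableEq ι] [DecidableEq κ] [DecidableEq l]

lemma span_units_top (S : Submodule E (Matrix ι ι E)) (h : ∀ X : Matrix ι ι E, IsUnit X → X ∈ S) :
    S = ⊤ := by
  have h1 : (1 : Matrix ι ι E) ∈ S := h 1 isUnit_one
  have hu : ∀ i j : ι, i ≠ j → IsUnit (transvection i j (1:E)) := by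
    intro i j hij
    rw [Matrix.isUnit_iff_isUnit_det, det_transvection_of_ne i j hij]
    exact isUnit_one
  have hne : ∀ i j : ι, i ≠ j → single i j (1:E) ∈ S := by
    intro i j hij
    have := S.sub_mem (h _ (hu i j hij)) h1
    simpa [transvection] using this
  have hd : ∀ i j : ι, single i j (1:E) ∈ S := by
    intro i j
    by_cases hij : i = j
    · subst hij
      by_cases hex : ∃ k : ι, i ≠ k
      · obtain ⟨k, hk⟩ := hex
        have h2 := h _ ((hu i k hk).mul (hu k i hk.symm))
        have h3 : transvection i k (1:E) * transvection k i 1 =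
            1 + single i k 1 + single k i 1 + single i i 1 := by
          simp [transvection, add_mul, mul_add]
          abel
        rw [h3] at h2
        have := S.sub_mem h2 (S.add_mem (S.add_mem h1 (hne i k hk)) (hne k i hk.symm))
        simpa using this
      · push Not at hex
        have : single i i (1:E) = 1 := by
          ext a b
          rw [← hex a, ← hex b]
          simp
        rw [this]; exact h1
    · exact hne i j hij
  rw [eq_top_iff]
  intro X _
  rw [matrix_eq_sum_single X]
  refine S.sum_mem fun i _ => S.sum_mem fun j _ => ?_
  have := S.smul_mem (X i j) (hd i j)
  simpa using this

/-- Schur complement vanishing. -/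
lemma schur_zero (X : Matrix ι ι E) (C : Matrix ι l E) (B : Matrix κ ι E) (D : Matrix κ l E)
    (hX : IsUnit X) (h : (fromBlocks X C B D).rank ≤ Fintype.card ι) : D = B * X⁻¹ * C := by
  have := hX.invertible
  by_contra hne
  have : ∃ k j, (D - B * X⁻¹ * C) k j ≠ 0 := by
    by_contra hc
    push Not at hc
    apply hne
    rw [← sub_eq_zero]
    ext k j
    exact hc k j
  obtain ⟨k, j, hkj⟩ := this
  let f : ι ⊕ Unit → ι ⊕ κ := Sum.map id (fun _ => k)
  let g : ι ⊕ Unit → ι ⊕ l := Sum.map id (fun _ => j)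
  have hsub : (fromBlocks X C B D).submatrix f g =
      fromBlocks X (C.submatrix id (fun _ => j)) (B.submatrix (fun _ => k) id)
        (D.submatrix (fun _ : Unit => k) (fun _ : Unit => j)) := by
    ext (a | a) (b | b) <;> rfl
  have hdet : ((fromBlocks X C B D).submatrix f g).det ≠ 0 := by
    rw [hsub, det_fromBlocks₁₁]
    refine mul_ne_zero ?_ ?_
    · exact ((Matrix.isUnit_iff_isUnit_det X).1 hX).ne_zero
    · rw [det_unique]
      convert hkj using 1
      simp [Matrix.mul_apply]
  have h1 := rank_of_det_ne_zero hdet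
  have h2 := rank_submatrix_le (fromBlocks X C B D) f g
  rw [h1] at h2
  simp at h2
  omega

lemma antidiag_rank (C : Matrix ι l E) (B : Matrix κ ι E) (D : Matrix κ l E) (i : ι)
    (hi : Fintype.card ι = 1)
    (h : (fromBlocks 0 C B D).rank ≤ 1) (hC : C ≠ 0) : B = 0 := by
  by_contra hB
  have hs : ∀ a : ι, a = i := fun a => (Fintype.card_le_one_iff.1 hi.le) a i
  have h1 : ∃ j, C i j ≠ 0 := by
    by_contra hc
    push Not at hc
    apply hC; ext a b; rw [hs a]; exact hc b
  have h2 : ∃ k, B k i ≠ 0 := by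
    by_contra hc
    push Not at hc
    apply hB; ext a b; rw [hs b]; exact hc a
  obtain ⟨j, hj⟩ := h1
  obtain ⟨k, hk⟩ := h2
  have hd : ((fromBlocks 0 C B D).submatrix (![Sum.inl i, Sum.inr k]) (![Sum.inl i, Sum.inr j])).det ≠ 0 := by
    rw [det_fin_two]
    simp [hj, hk]
  have h3 := rank_of_det_ne_zero hd
  have h4 := rank_submatrix_le (fromBlocks 0 C B D) (![Sum.inl i, Sum.inr k]) (![Sum.inl i, Sum.inr j])
  rw [h3] at h4
  simp at h4
  omega

/-- dimension bound for pairs of annihilating matrix spaces -/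
lemma ann_bound (K : Submodule E (Matrix κ ι E)) (U : Submodule E (Matrix ι l E))
    (h : ∀ B ∈ K, ∀ C ∈ U, B * C = 0) (hc : Fintype.card l ≤ Fintype.card κ) :
    Module.finrank E K + Module.finrank E U ≤ Fintype.card ι * Fintype.card κ := by
  let S : Submodule E (ι → E) := Submodule.span E {v | ∃ C ∈ U, ∃ j, v = C.col j}
  have hU : Module.finrank E U ≤ Fintype.card l * Module.finrank E S := by
    let f : U →ₗ[E] (l → S) :=
      { toFun := fun C j => ⟨C.1.col j, Submodule.subset_span ⟨C.1, C.2, j, rfl⟩⟩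
        map_add' := fun _ _ => rfl
        map_smul' := fun _ _ => rfl }
    have hf : Function.Injective f := by
      intro C C' hCC
      ext a b
      have := congrFun (congrArg Subtype.val (congrFun hCC b)) a
      exact this
    have := LinearMap.finrank_le_finrank_of_injective hf
    rw [Module.finrank_pi_fintype] at this
    simpa using this
  have hK : Module.finrank E K ≤ Fintype.card κ * Module.finrank E ((ι → E) ⧸ S) := by
    have hker : ∀ B : K, S ≤ LinearMap.ker (B.1.mulVecLin) := by
      intro B
      refine Submodule.span_le.2 ?_
      rintro _ ⟨C, hC, j, rfl⟩
      have := h B.1 B.2 C hC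
      simp only [SetLike.mem_coe, LinearMap.mem_ker, mulVecLin_apply]
      ext k
      exact congrFun (congrFun this k) j
    let f : K →ₗ[E] (((ι → E) ⧸ S) →ₗ[E] (κ → E)) :=
      { toFun := fun B => S.liftQ B.1.mulVecLin (hker B)
        map_add' := fun B B' => by
          ext; simp
        map_smul' := fun c B => by
          ext; simp }
    have hf : Function.Injective f := by
      intro B B' hBB
      have : B.1.mulVecLin = B'.1.mulVecLin := by
        have h1 : (f B).comp S.mkQ = (f B').comp S.mkQ := by rw [hBB]
        simpa [f] using h1
      exact Subtype.ext (Matrix.toLin'.injective (by simpa [Matrix.toLin'_apply'] using this))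
    have := LinearMap.finrank_le_finrank_of_injective hf
    rw [Module.finrank_linearMap, Module.finrank_fintype_fun_eq_card] at this
    rw [mul_comm]; exact this
  have hS := Submodule.finrank_quotient_add_finrank S
  rw [Module.finrank_fintype_fun_eq_card] at hS
  rw [← hS]
  nlinarith [Nat.mul_le_mul_right (Module.finrank E S) hc]


lemma finrank_map_add_inf_ker {V V' : Type*} [AddCommGroup V] [Module E V] [AddCommGroup V']
    [Module E V'] [FiniteDimensional E V] (f : V →ₗ[E] V') (S : Submodule E V) :
    Module.finrank E (S.map f) + Module.finrank E (S ⊓ LinearMap.ker f : Submodule E V)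
      = Module.finrank E S := by
  have h := LinearMap.finrank_range_add_finrank_ker (f.domRestrict S)
  rw [LinearMap.range_domRestrict] at h
  rw [← h]
  congr 1
  have : (S ⊓ LinearMap.ker f : Submodule E V)
      = (LinearMap.ker (f.domRestrict S)).map S.subtype := by
    ext x
    simp only [Submodule.mem_inf, LinearMap.mem_ker, Submodule.mem_map, Submodule.subtype_apply,
      Subtype.exists, LinearMap.domRestrict_apply]
    constructor
    · rintro ⟨h1, h2⟩; exact ⟨x, h1, h2, rfl⟩
    · rintro ⟨y, h1, h2, rfl⟩; exact ⟨h1, h2⟩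
  rw [this, Submodule.finrank_map_subtype_eq]

/-- Linear block projections. -/
def b11 : Matrix (ι ⊕ κ) (ι ⊕ l) E →ₗ[E] Matrix ι ι E :=
  { toFun := toBlocks₁₁, map_add' := fun _ _ => rfl, map_smul' := fun _ _ => rfl }
def b12 : Matrix (ι ⊕ κ) (ι ⊕ l) E →ₗ[E] Matrix ι l E :=
  { toFun := toBlocks₁₂, map_add' := fun _ _ => rfl, map_smul' := fun _ _ => rfl }
def b21 : Matrix (ι ⊕ κ) (ι ⊕ l) E →ₗ[E] Matrix κ ι E :=
  { toFun := toBlocks₂₁, map_add' := fun _ _ => rfl, map_smul' := fun _ _ => rfl }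
def b22 : Matrix (ι ⊕ κ) (ι ⊕ l) E →ₗ[E] Matrix κ l E :=
  { toFun := toBlocks₂₂, map_add' := fun _ _ => rfl, map_smul' := fun _ _ => rfl }

lemma entry_mul_single (B : Matrix κ ι E) (C : Matrix ι l E) (i a : ι) (k : κ) (j : l) :
    (B * single i a (1:E) * C) k j = B k i * C a j := by
  rw [Matrix.mul_apply, Finset.sum_eq_single a]
  · simp
  · intro b _ hb
    rw [Matrix.mul_single_apply_of_ne _ _ _ _ _ hb, zero_mul]
  · simp

lemma exists_entry {α β : Type*} {M : Matrix α β E} (h : M ≠ 0) : ∃ a b, M a b ≠ 0 := by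
  by_contra hc
  push Not at hc
  exact h (by ext a b; exact hc a b)

lemma mul_all_zero_right {B : Matrix κ ι E} {C : Matrix ι l E} (hB : B ≠ 0)
    (h : ∀ Y : Matrix ι ι E, B * Y * C = 0) : C = 0 := by
  obtain ⟨k, i, hki⟩ := exists_entry hB
  ext a j
  have := congrFun (congrFun (h (single i a 1)) k) j
  rw [entry_mul_single] at this
  simpa [hki] using this

lemma mul_all_zero_left {B : Matrix κ ι E} {C : Matrix ι l E} (hC : C ≠ 0)
    (h : ∀ Y : Matrix ι ι E, B * Y * C = 0) : B = 0 := by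
  by_contra hB
  exact hC (mul_all_zero_right hB h)

variable {𝒜 : Submodule E (Matrix (ι ⊕ κ) (ι ⊕ l) E)}

/-- The part of the space with vanishing top-left block. -/
def Wof (𝒜 : Submodule E (Matrix (ι ⊕ κ) (ι ⊕ l) E)) :
    Submodule E (Matrix (ι ⊕ κ) (ι ⊕ l) E) := 𝒜 ⊓ LinearMap.ker b11

lemma mem_Wof {A : Matrix (ι ⊕ κ) (ι ⊕ l) E} (h : A ∈ Wof 𝒜) :
    fromBlocks 0 (b12 A) (b21 A) (b22 A) ∈ 𝒜 := by
  obtain ⟨h1, h2⟩ := h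
  have h2 : A.toBlocks₁₁ = 0 := h2
  have := fromBlocks_toBlocks A
  rw [h2] at this
  change fromBlocks 0 A.toBlocks₁₂ A.toBlocks₂₁ A.toBlocks₂₂ ∈ 𝒜
  rw [this]; exact h1

lemma W_D (hP : fromBlocks 1 0 0 0 ∈ 𝒜) (hr : ∀ A ∈ 𝒜, A.rank ≤ Fintype.card ι)
    {C : Matrix ι l E} {B : Matrix κ ι E} {D : Matrix κ l E}
    (h : fromBlocks 0 C B D ∈ 𝒜) : D = B * C := by
  have h1 := 𝒜.add_mem hP h
  rw [fromBlocks_add] at h1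
  simp only [add_zero, zero_add] at h1
  have := schur_zero _ _ _ _ isUnit_one (hr _ h1)
  simpa using this

lemma ext_blocks {A A' : Matrix (ι ⊕ κ) (ι ⊕ l) E} (h1 : b11 A = b11 A') (h2 : b12 A = b12 A')
    (h3 : b21 A = b21 A') (h4 : b22 A = b22 A') : A = A' := by
  rw [← fromBlocks_toBlocks A, ← fromBlocks_toBlocks A']
  exact fromBlocks_inj.2 ⟨h1, h2, h3, h4⟩

lemma W_D' (hP : fromBlocks 1 0 0 0 ∈ 𝒜) (hr : ∀ A ∈ 𝒜, A.rank ≤ Fintype.card ι)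
    {A : Matrix (ι ⊕ κ) (ι ⊕ l) E} (h : A ∈ Wof 𝒜) : b22 A = b21 A * b12 A :=
  W_D hP hr (mem_Wof h)

lemma W_ker (hP : fromBlocks 1 0 0 0 ∈ 𝒜) (hr : ∀ A ∈ 𝒜, A.rank ≤ Fintype.card ι)
    {A : Matrix (ι ⊕ κ) (ι ⊕ l) E} (h : A ∈ Wof 𝒜) (h1 : b12 A = 0) (h2 : b21 A = 0) : A = 0 := by
  have h4 := W_D' hP hr h
  refine ext_blocks ?_ ?_ ?_ ?_
  · rw [map_zero]; exact h.2
  · rw [map_zero]; exact h1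
  · rw [map_zero]; exact h2
  · rw [h4, h1, Matrix.mul_zero, map_zero]

lemma W_bound (hP : fromBlocks 1 0 0 0 ∈ 𝒜) (hr : ∀ A ∈ 𝒜, A.rank ≤ Fintype.card ι)
    (hc : Fintype.card l ≤ Fintype.card κ) :
    Module.finrank E (Wof 𝒜) ≤ Fintype.card ι * Fintype.card κ := by
  have e1 := finrank_map_add_inf_ker b12 (Wof 𝒜)
  have e2 := finrank_map_add_inf_ker b21 (Wof 𝒜 ⊓ LinearMap.ker b12)
  have e3 : (Wof 𝒜 ⊓ LinearMap.ker b12 ⊓ LinearMap.ker b21 : Submodule E _) = ⊥ := by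
    rw [eq_bot_iff]
    rintro A ⟨⟨h1, h2⟩, h3⟩
    exact W_ker hP hr h1 h2 h3
  rw [e3, finrank_bot] at e2
  have := ann_bound ((Wof 𝒜 ⊓ LinearMap.ker b12).map b21) ((Wof 𝒜).map b12) ?_ hc
  · omega
  · rintro _ ⟨A, ⟨hA, hA'⟩, rfl⟩ _ ⟨A', hA2, rfl⟩
    have h1 := W_D' hP hr hA2
    have h2 := W_D' hP hr (Submodule.add_mem _ hA hA2)
    have h3 := W_D' hP hr hA
    have hA' : b12 A = 0 := hA'
    simp only [map_add, hA', zero_add, Matrix.add_mul, Matrix.mul_zero, h3, h1] at h2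
    simpa using h2.symm

lemma block_bound (hP : fromBlocks 1 0 0 0 ∈ 𝒜) (hr : ∀ A ∈ 𝒜, A.rank ≤ Fintype.card ι)
    (hc : Fintype.card l ≤ Fintype.card κ) :
    Module.finrank E 𝒜 ≤ Fintype.card ι * (Fintype.card ι + Fintype.card κ) := by
  have e1 := finrank_map_add_inf_ker b11 𝒜
  have e2 := W_bound hP hr hc
  have e3 := Submodule.finrank_le (𝒜.map b11)
  rw [Module.finrank_matrix, Module.finrank_self, mul_one] at e3
  rw [mul_add]
  unfold Wof at e2
  omega

lemma block_eq (hP : fromBlocks 1 0 0 0 ∈ 𝒜) (hr : ∀ A ∈ 𝒜, A.rank ≤ Fintype.card ι)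
    (hc : Fintype.card l ≤ Fintype.card κ)
    (hd : Module.finrank E 𝒜 = Fintype.card ι * (Fintype.card ι + Fintype.card κ)) :
    𝒜.map b11 = ⊤ ∧ Module.finrank E (Wof 𝒜) = Fintype.card ι * Fintype.card κ := by
  have e1 := finrank_map_add_inf_ker b11 𝒜
  have e2 := W_bound hP hr hc
  have e3 := Submodule.finrank_le (𝒜.map b11)
  have e4 : Module.finrank E (Matrix ι ι E) = Fintype.card ι * Fintype.card ι := by
    rw [Module.finrank_matrix, Module.finrank_self, mul_one]
  rw [mul_add] at hd
  unfold Wof at *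
  refine ⟨Submodule.eq_top_of_finrank_eq ?_, ?_⟩ <;> omega

lemma fib (hr : ∀ A ∈ 𝒜, A.rank ≤ Fintype.card ι) {A : Matrix (ι ⊕ κ) (ι ⊕ l) E} (hA : A ∈ 𝒜)
    (hX : IsUnit (b11 A)) : b22 A = b21 A * (b11 A)⁻¹ * b12 A := by
  refine schur_zero _ _ _ _ hX ?_
  have := hr A hA
  rw [← fromBlocks_toBlocks A] at this
  exact this

lemma polar (hr : ∀ A ∈ 𝒜, A.rank ≤ Fintype.card ι) (hs : 𝒜.map b11 = ⊤)
    {w w' : Matrix (ι ⊕ κ) (ι ⊕ l) E} (hw : w ∈ Wof 𝒜) (hw' : w' ∈ Wof 𝒜) (Y : Matrix ι ι E) :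
    b21 w * Y * b12 w' + b21 w' * Y * b12 w = 0 := by
  let T : Submodule E (Matrix ι ι E) :=
    { carrier := {Y | b21 w * Y * b12 w' + b21 w' * Y * b12 w = 0}
      add_mem' := by
        intro a b ha hb
        simp only [Set.mem_ofPred_eq] at *
        rw [Matrix.mul_add, Matrix.mul_add, Matrix.add_mul, Matrix.add_mul, add_add_add_comm,
          ha, hb, add_zero]
      zero_mem' := by simp
      smul_mem' := by
        intro c a ha
        simp only [Set.mem_ofPred_eq] at *
        simp only [Matrix.mul_smul, Matrix.smul_mul]
        rw [← smul_add, ha, smul_zero] }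
  have hT : T = ⊤ := by
    refine span_units_top T ?_
    intro Z hZ
    have : Z⁻¹ ∈ 𝒜.map b11 := by rw [hs]; trivial
    obtain ⟨A, hA, hAZ⟩ := this
    have hZ' : IsUnit Z⁻¹ := by rwa [Matrix.isUnit_nonsing_inv_iff]
    have w1 : b11 w = 0 := hw.2
    have w2 : b11 w' = 0 := hw'.2
    have f0 := fib hr hA (by rwa [hAZ])
    have f1 := fib hr (𝒜.add_mem hA hw.1) (by rwa [map_add, hAZ, w1, add_zero])
    have f2 := fib hr (𝒜.add_mem hA hw'.1) (by rwa [map_add, hAZ, w2, add_zero])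
    have f3 := fib hr (𝒜.add_mem (𝒜.add_mem hA hw.1) hw'.1)
      (by rwa [map_add, map_add, hAZ, w1, w2, add_zero, add_zero])
    have hzz : Z⁻¹⁻¹ = Z := Matrix.nonsing_inv_nonsing_inv _ ((Matrix.isUnit_iff_isUnit_det _).1 hZ)
    simp only [map_add, w1, w2, add_zero, hAZ, hzz] at f0 f1 f2 f3
    change b21 w * Z * b12 w' + b21 w' * Z * b12 w = 0
    have key : b21 w * Z * b12 w' + b21 w' * Z * b12 w =
      (b21 A + b21 w + b21 w') * Z * (b12 A + b12 w + b12 w')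
      - (b21 A + b21 w) * Z * (b12 A + b12 w) - (b21 A + b21 w') * Z * (b12 A + b12 w')
      + b21 A * Z * b12 A := by
      simp only [Matrix.add_mul, Matrix.mul_add]; abel
    rw [key, ← f0, ← f1, ← f2, ← f3]
    abel
  have : Y ∈ T := by rw [hT]; trivial
  exact this

lemma dich (hP : fromBlocks 1 0 0 0 ∈ 𝒜) (hr : ∀ A ∈ 𝒜, A.rank ≤ Fintype.card ι)
    (hc : Fintype.card l ≤ Fintype.card κ) (hs : 𝒜.map b11 = ⊤)
    (hW : Module.finrank E (Wof 𝒜) = Fintype.card ι * Fintype.card κ) :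
    (∀ w ∈ Wof 𝒜, b12 w = 0) ∨ (∀ w ∈ Wof 𝒜, b21 w = 0) := by
  by_cases h1 : ∃ w ∈ Wof 𝒜, b12 w = 0 ∧ b21 w ≠ 0
  · left
    obtain ⟨w, hw, hw1, hw2⟩ := h1
    intro w' hw'
    refine mul_all_zero_right hw2 fun Y => ?_
    have := polar hr hs hw hw' Y
    simpa [hw1] using this
  by_cases h2 : ∃ w ∈ Wof 𝒜, b21 w = 0 ∧ b12 w ≠ 0
  · right
    obtain ⟨w, hw, hw1, hw2⟩ := h2
    intro w' hw'
    refine mul_all_zero_left hw2 fun Y => ?_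
    have := polar hr hs hw hw' Y
    simpa [hw1] using this
  push Not at h1 h2
  left
  have e1 := finrank_map_add_inf_ker b12 (Wof 𝒜)
  have e2 : (Wof 𝒜 ⊓ LinearMap.ker b12 : Submodule E _) = ⊥ := by
    rw [eq_bot_iff]
    rintro A ⟨hA, hA'⟩
    exact W_ker hP hr hA hA' (h1 A hA hA')
  rw [e2, finrank_bot, add_zero] at e1
  have e3 : (Wof 𝒜).map b12 = ⊤ := by
    apply Submodule.eq_top_of_finrank_eq
    apply le_antisymm (Submodule.finrank_le _)
    rw [e1, hW, Module.finrank_matrix, Module.finrank_self, mul_one]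
    exact Nat.mul_le_mul_left _ hc
  intro w0 hw0
  ext i j
  exfalso
  have hlift : ∀ C : Matrix ι l E, ∃ w ∈ Wof 𝒜, b12 w = C := by
    intro C
    have : C ∈ (Wof 𝒜).map b12 := by rw [e3]; trivial
    exact this
  have hne : ∀ a : ι, single a j (1:E) ≠ 0 := by
    intro a h
    have := congrFun (congrFun h a) j
    simp at this
  by_cases hcard : Fintype.card ι = 1
  · obtain ⟨w, hw, hwC⟩ := hlift (single i j 1)
    have hC : b12 w ≠ 0 := by rw [hwC]; exact hne i
    have := antidiag_rank (b12 w) (b21 w) (b22 w) i hcard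
      (by rw [← hcard]; exact hr _ (mem_Wof hw)) hC
    exact hC (h2 w hw this)
  · have : ∃ i', i ≠ i' := by
      by_contra hcon
      push Not at hcon
      exact hcard (Fintype.card_eq_one_iff.2 ⟨i, fun y => (hcon y).symm⟩)
    obtain ⟨i', hii⟩ := this
    obtain ⟨w, hw, hwC⟩ := hlift (single i j 1)
    obtain ⟨w', hw', hwC'⟩ := hlift (single i' j 1)
    have hC : b12 w ≠ 0 := by rw [hwC]; exact hne i
    apply hC
    apply h2 w hw
    ext k a
    have := congrFun (congrFun (polar hr hs hw hw' (single a i' 1)) k) j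
    rw [Matrix.add_apply, entry_mul_single, entry_mul_single, hwC, hwC'] at this
    simpa [hii] using this

lemma final1 (hP : fromBlocks 1 0 0 0 ∈ 𝒜) (hr : ∀ A ∈ 𝒜, A.rank ≤ Fintype.card ι)
    (hs : 𝒜.map b11 = ⊤) (k : κ)
    (hW : Fintype.card ι * Fintype.card κ ≤ Module.finrank E (Wof 𝒜))
    (h : ∀ w ∈ Wof 𝒜, b12 w = 0) : ∀ A ∈ 𝒜, b12 A = 0 ∧ b22 A = 0 := by
  have e1 := finrank_map_add_inf_ker b21 (Wof 𝒜)
  have e2 : (Wof 𝒜 ⊓ LinearMap.ker b21 : Submodule E _) = ⊥ := by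
    rw [eq_bot_iff]
    rintro A ⟨hA, hA'⟩
    exact W_ker hP hr hA (h A hA) hA'
  rw [e2, finrank_bot, add_zero] at e1
  have e3 : (Wof 𝒜).map b21 = ⊤ := by
    apply Submodule.eq_top_of_finrank_eq
    apply le_antisymm (Submodule.finrank_le _)
    rw [e1, Module.finrank_matrix, Module.finrank_self, mul_one, mul_comm]
    exact hW
  have hunit : ∀ A ∈ 𝒜, IsUnit (b11 A) → b12 A = 0 ∧ b22 A = 0 := by
    intro A hA hX
    have f0 := fib hr hA hX
    have hz : (b11 A)⁻¹ * b12 A = 0 := by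
      ext i j
      have : single k i (1:E) ∈ (Wof 𝒜).map b21 := by rw [e3]; trivial
      obtain ⟨w, hw, hwB⟩ := this
      have w1 : b11 w = 0 := hw.2
      have f1 := fib hr (𝒜.add_mem hA hw.1) (by rwa [map_add, w1, add_zero])
      have w2 := W_D' hP hr hw
      simp only [map_add, w1, h w hw, w2, f0, Matrix.mul_zero, add_zero, Matrix.add_mul, hwB] at f1
      have f2 := congrFun (congrFun (left_eq_add.1 f1) k) j
      rw [Matrix.mul_assoc] at f2
      simpa using f2
    have h0 : b12 A = 0 := by
      have := congrArg (fun M => b11 A * M) hz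
      simpa [Matrix.mul_nonsing_inv_cancel_left _ _ ((Matrix.isUnit_iff_isUnit_det _).1 hX)] using this
    exact ⟨h0, by rw [f0, h0, Matrix.mul_zero]⟩
  have hT : (𝒜 ⊓ LinearMap.ker b12 ⊓ LinearMap.ker b22).map b11 = ⊤ := by
    refine span_units_top _ fun X hX => ?_
    have : X ∈ 𝒜.map b11 := by rw [hs]; trivial
    obtain ⟨A, hA, rfl⟩ := this
    obtain ⟨h1, h2⟩ := hunit A hA hX
    exact ⟨A, ⟨⟨hA, h1⟩, h2⟩, rfl⟩
  intro A hA
  have : b11 A ∈ (𝒜 ⊓ LinearMap.ker b12 ⊓ LinearMap.ker b22).map b11 := by rw [hT]; trivial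
  obtain ⟨A', ⟨⟨h1, h2⟩, h3⟩, h4⟩ := this
  have h2 : b12 A' = 0 := h2
  have h3 : b22 A' = 0 := h3
  have hw : A - A' ∈ Wof 𝒜 := ⟨𝒜.sub_mem hA h1, by
    change b11 (A - A') = 0
    rw [map_sub, h4, sub_self]⟩
  have g1 := h _ hw
  have g2 := W_D' hP hr hw
  rw [g1, Matrix.mul_zero] at g2
  rw [map_sub, h2, sub_zero] at g1
  rw [map_sub, h3, sub_zero] at g2
  exact ⟨g1, g2⟩

lemma final2 (hP : fromBlocks 1 0 0 0 ∈ 𝒜) (hr : ∀ A ∈ 𝒜, A.rank ≤ Fintype.card ι)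
    (hs : 𝒜.map b11 = ⊤) (j : l)
    (hW : Fintype.card ι * Fintype.card l ≤ Module.finrank E (Wof 𝒜))
    (h : ∀ w ∈ Wof 𝒜, b21 w = 0) : ∀ A ∈ 𝒜, b21 A = 0 ∧ b22 A = 0 := by
  have e1 := finrank_map_add_inf_ker b12 (Wof 𝒜)
  have e2 : (Wof 𝒜 ⊓ LinearMap.ker b12 : Submodule E _) = ⊥ := by
    rw [eq_bot_iff]
    rintro A ⟨hA, hA'⟩
    exact W_ker hP hr hA hA' (h A hA)
  rw [e2, finrank_bot, add_zero] at e1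
  have e3 : (Wof 𝒜).map b12 = ⊤ := by
    apply Submodule.eq_top_of_finrank_eq
    apply le_antisymm (Submodule.finrank_le _)
    rw [e1, Module.finrank_matrix, Module.finrank_self, mul_one]
    exact hW
  have hunit : ∀ A ∈ 𝒜, IsUnit (b11 A) → b21 A = 0 ∧ b22 A = 0 := by
    intro A hA hX
    have f0 := fib hr hA hX
    have hz : b21 A * (b11 A)⁻¹ = 0 := by
      ext k i
      have : single i j (1:E) ∈ (Wof 𝒜).map b12 := by rw [e3]; trivial
      obtain ⟨w, hw, hwB⟩ := this
      have w1 : b11 w = 0 := hw.2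
      have f1 := fib hr (𝒜.add_mem hA hw.1) (by rwa [map_add, w1, add_zero])
      have w2 := W_D' hP hr hw
      simp only [map_add, w1, h w hw, w2, f0, Matrix.zero_mul, add_zero, Matrix.mul_add, hwB] at f1
      have f2 := congrFun (congrFun (left_eq_add.1 f1) k) j
      simpa using f2
    have h0 : b21 A = 0 := by
      have := congrArg (fun M => M * b11 A) hz
      simpa [Matrix.nonsing_inv_mul_cancel_right _ _ ((Matrix.isUnit_iff_isUnit_det _).1 hX)] using this
    exact ⟨h0, by rw [f0, h0, Matrix.zero_mul, Matrix.zero_mul]⟩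
  have hT : (𝒜 ⊓ LinearMap.ker b21 ⊓ LinearMap.ker b22).map b11 = ⊤ := by
    refine span_units_top _ fun X hX => ?_
    have : X ∈ 𝒜.map b11 := by rw [hs]; trivial
    obtain ⟨A, hA, rfl⟩ := this
    obtain ⟨h1, h2⟩ := hunit A hA hX
    exact ⟨A, ⟨⟨hA, h1⟩, h2⟩, rfl⟩
  intro A hA
  have : b11 A ∈ (𝒜 ⊓ LinearMap.ker b21 ⊓ LinearMap.ker b22).map b11 := by rw [hT]; trivial
  obtain ⟨A', ⟨⟨h1, h2⟩, h3⟩, h4⟩ := this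
  have h2 : b21 A' = 0 := h2
  have h3 : b22 A' = 0 := h3
  have hw : A - A' ∈ Wof 𝒜 := ⟨𝒜.sub_mem hA h1, by
    change b11 (A - A') = 0
    rw [map_sub, h4, sub_self]⟩
  have g1 := h _ hw
  have g2 := W_D' hP hr hw
  rw [g1, Matrix.zero_mul] at g2
  rw [map_sub, h2, sub_zero] at g1
  rw [map_sub, h3, sub_zero] at g2
  exact ⟨g1, g2⟩

theorem block_class (hP : fromBlocks 1 0 0 0 ∈ 𝒜) (hr : ∀ A ∈ 𝒜, A.rank ≤ Fintype.card ι)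
    (hc : Fintype.card l ≤ Fintype.card κ)
    (hd : Module.finrank E 𝒜 = Fintype.card ι * (Fintype.card ι + Fintype.card κ)) :
    (∀ A ∈ 𝒜, b12 A = 0 ∧ b22 A = 0) ∨ (∀ A ∈ 𝒜, b21 A = 0 ∧ b22 A = 0) := by
  obtain ⟨hs, hW⟩ := block_eq hP hr hc hd
  rcases isEmpty_or_nonempty l with hl | ⟨⟨j⟩⟩
  · left
    intro A _
    exact ⟨by ext a b; exact hl.elim b, by ext a b; exact hl.elim b⟩
  have : 0 < Fintype.card κ := lt_of_lt_of_le (Fintype.card_pos_iff.2 ⟨j⟩) hc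
  obtain ⟨k⟩ := Fintype.card_pos_iff.1 this
  rcases dich hP hr hc hs hW with h | h
  · exact Or.inl (final1 hP hr hs k hW.ge h)
  · exact Or.inr (final2 hP hr hs j ((Nat.mul_le_mul_left _ hc).trans hW.ge) h)

end Block

section Shrink
set_option linter.unusedSectionVars false
open Matrix

lemma normal_form {a b : ℕ} (P : Matrix (Fin a) (Fin b) F) :
    ∃ (r c d : ℕ) (Φ : Matrix (Fin a) (Fin b) F ≃ₗ[F] Matrix (Fin r ⊕ Fin c) (Fin r ⊕ Fin d) F),
      r = P.rank ∧ Φ P = fromBlocks 1 0 0 0 ∧ (∀ A, (Φ A).rank = A.rank) ∧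
      r + c = a ∧ r + d = b := by
  let p : (Fin b → F) →ₗ[F] (Fin a → F) := Matrix.toLin' P
  obtain ⟨Q, hQ⟩ := Submodule.exists_isCompl (LinearMap.ker p)
  obtain ⟨T, hT⟩ := Submodule.exists_isCompl (LinearMap.range p)
  let e : Q ≃ₗ[F] LinearMap.range p := p.kerComplementEquivRange hQ.symm
  have he : ∀ x : Q, (e x : Fin a → F) = p x := fun x => by
    simp [e]
  let bQ := Module.finBasis F Q
  let bK := Module.finBasis F (LinearMap.ker p)
  let bT := Module.finBasis F T
  let bV := (bQ.prod bK).map (Submodule.prodEquivOfIsCompl Q (LinearMap.ker p) hQ.symm)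
  let bW := ((bQ.map e).prod bT).map (Submodule.prodEquivOfIsCompl (LinearMap.range p) T hT)
  refine ⟨_, _, _, (Matrix.toLin').trans (LinearMap.toMatrix bV bW), ?_, ?_, ?_, ?_, ?_⟩
  · rw [e.finrank_eq]; rfl
  · have hinl : ∀ j, p (bV (Sum.inl j)) = bW (Sum.inl j) := by
      intro j
      simp [bV, bW, he]
    have hinr : ∀ j, p (bV (Sum.inr j)) = 0 := by
      intro j
      simp [bV]
    change LinearMap.toMatrix bV bW p = _
    ext i j
    rw [LinearMap.toMatrix_apply]
    rcases j with j | j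
    · rw [hinl, Module.Basis.repr_self]
      rcases i with i | i
      · simp [Finsupp.single_apply, Matrix.one_apply, eq_comm]
      · simp
    · rw [hinr]
      rcases i with i | i <;> simp
  · intro A
    rw [rank_eq_finrank_range_toLin _ bW bV]
    have h0 : Matrix.toLin bV bW (LinearMap.toMatrix bV bW (Matrix.toLin' A)) = Matrix.toLin' A := by
      convert Matrix.toLin_toMatrix bV bW (Matrix.toLin' A)
    rw [LinearEquiv.trans_apply, h0]
    rfl
  · have h1 := Module.finrank_eq_card_basis bW
    simpa using h1.symm
  · have h1 := Module.finrank_eq_card_basis bV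
    simpa using h1.symm

variable {a b : ℕ}

lemma bdd_rank (𝒜 : Submodule F (Matrix (Fin a) (Fin b) F)) :
    BddAbove {w | ∃ A ∈ 𝒜, A.rank = w} := by
  refine ⟨b, ?_⟩
  rintro _ ⟨A, _, rfl⟩
  exact A.rank_le_width

lemma le_maxrank {𝒜 : Submodule F (Matrix (Fin a) (Fin b) F)} {A} (h : A ∈ 𝒜) :
    A.rank ≤ maxrank 𝒜 := le_csSup (bdd_rank 𝒜) ⟨A, h, rfl⟩

lemma exists_maxrank (𝒜 : Submodule F (Matrix (Fin a) (Fin b) F)) :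
    ∃ A ∈ 𝒜, A.rank = maxrank 𝒜 :=
  Nat.sSup_mem (s := {w | ∃ A ∈ 𝒜, A.rank = w}) ⟨_, 0, 𝒜.zero_mem, rfl⟩ (bdd_rank 𝒜)

lemma maxrank_le_width (𝒜 : Submodule F (Matrix (Fin a) (Fin b) F)) : maxrank 𝒜 ≤ b := by
  obtain ⟨A, _, h⟩ := exists_maxrank 𝒜
  rw [← h]; exact A.rank_le_width

lemma map_normal {𝒜 : Submodule F (Matrix (Fin a) (Fin b) F)} {r c d : ℕ}
    (Φ : Matrix (Fin a) (Fin b) F ≃ₗ[F] Matrix (Fin r ⊕ Fin c) (Fin r ⊕ Fin d) F)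
    (hΦ : ∀ A, (Φ A).rank = A.rank) (h : maxrank 𝒜 ≤ r) :
    ∀ A ∈ 𝒜.map Φ.toLinearMap, A.rank ≤ Fintype.card (Fin r) := by
  rintro _ ⟨A, hA, rfl⟩
  rw [Fintype.card_fin]
  exact (hΦ A).le.trans ((le_maxrank hA).trans h)

lemma finrank_le_maxrank (hab : b ≤ a) (𝒜 : Submodule F (Matrix (Fin a) (Fin b) F)) :
    Module.finrank F 𝒜 ≤ a * maxrank 𝒜 := by
  obtain ⟨P, hP, hPr⟩ := exists_maxrank 𝒜
  obtain ⟨r, c, d, Φ, h1, h2, h3, h4, h5⟩ := normal_form P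
  have := block_bound (𝒜 := 𝒜.map Φ.toLinearMap) ⟨P, hP, h2⟩ (map_normal Φ h3 (by omega))
    (by simp; omega)
  rw [LinearEquiv.finrank_map_eq] at this
  simp only [Fintype.card_fin] at this
  rw [h4, h1, hPr, mul_comm] at this
  exact this

lemma shrink (hab : b ≤ a) (𝒜 : Submodule F (Matrix (Fin a) (Fin b) F))
    (hopt : IsOptAnticode 𝒜) (hpos : 0 < maxrank 𝒜) :
    ∃ 𝒜' ≤ 𝒜, IsOptAnticode 𝒜' ∧ maxrank 𝒜' + 1 = maxrank 𝒜 := by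
  unfold IsOptAnticode at hopt ⊢
  have hbpos := maxrank_le_width 𝒜
  suffices h : ∃ 𝒜' ≤ 𝒜, a * maxrank 𝒜 ≤ Module.finrank F 𝒜' + a ∧
      ∀ A ∈ 𝒜', A.rank + 1 ≤ maxrank 𝒜 by
    obtain ⟨𝒜', hle, h1, h2⟩ := h
    obtain ⟨A, hA, hAr⟩ := exists_maxrank 𝒜'
    have h3 := h2 A hA
    rw [hAr] at h3
    have h4 := finrank_le_maxrank hab 𝒜'
    have h5 : a * (maxrank 𝒜' + 1) ≤ a * maxrank 𝒜 := Nat.mul_le_mul_left _ h3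
    have h6 : a * maxrank 𝒜 ≤ a * (maxrank 𝒜' + 1) := by rw [mul_add]; omega
    have h7 : maxrank 𝒜' + 1 = maxrank 𝒜 :=
      Nat.eq_of_mul_eq_mul_left (by omega) (le_antisymm h5 h6)
    refine ⟨𝒜', hle, ?_, h7⟩
    rw [← h7, mul_add] at h1
    omega
  obtain ⟨P, hP, hPr⟩ := exists_maxrank 𝒜
  obtain ⟨r, c, d, Φ, h1, h2, h3, h4, h5⟩ := normal_form P
  have hcl := block_class (𝒜 := 𝒜.map Φ.toLinearMap) ⟨P, hP, h2⟩ (map_normal Φ h3 (by omega))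
    (by simp; omega) (by
      rw [LinearEquiv.finrank_map_eq, hopt]
      simp only [Fintype.card_fin]
      rw [h4, h1, hPr, mul_comm])
  have hr : r = maxrank 𝒜 := h1.trans hPr
  let i : Fin r := ⟨0, by omega⟩
  have key : ∀ (k : ℕ) (_ : k ≤ a) (V : Type) [Fintype V] (_ : Fintype.card V = k)
      (f : Matrix (Fin a) (Fin b) F →ₗ[F] (V → F)),
      a * maxrank 𝒜 ≤ Module.finrank F (𝒜 ⊓ LinearMap.ker f : Submodule F _) + a := by
    intro k hk V _ hV f
    have e1 := finrank_map_add_inf_ker f 𝒜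
    have e2 := Submodule.finrank_le (𝒜.map f)
    rw [Module.finrank_fintype_fun_eq_card, hV] at e2
    omega
  rcases hcl with hcl | hcl
  · let f : Matrix (Fin a) (Fin b) F →ₗ[F] (Fin r ⊕ Fin c → F) :=
      { toFun := fun A x => Φ A x (Sum.inl i)
        map_add' := fun A B => by ext; simp
        map_smul' := fun s A => by ext; simp }
    refine ⟨𝒜 ⊓ LinearMap.ker f, inf_le_left, key a le_rfl _ (by simpa using h4) f, ?_⟩
    rintro A ⟨hA, hf⟩
    obtain ⟨g1, g2⟩ := hcl (Φ A) ⟨A, hA, rfl⟩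
    have hf : f A = 0 := hf
    rw [← h3 A, ← rank_transpose]
    have := rank_le_card_of_support_subset (Φ A)ᵀ
      ((Finset.univ.erase i).image (Sum.inl : Fin r → Fin r ⊕ Fin d)) ?_
    · refine (Nat.add_le_add_right (this.trans Finset.card_image_le) 1).trans ?_
      rw [Finset.card_erase_of_mem (Finset.mem_univ _), Finset.card_univ, Fintype.card_fin]
      omega
    · rw [Function.support_subset_iff']
      rintro (x | x) hx
      · have : x = i := by
          by_contra hne
          exact hx (by simp [hne])
        subst this
        exact hf
      · ext (y | y)
        · exact congrFun (congrFun g1 y) x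
        · exact congrFun (congrFun g2 y) x
  · let f : Matrix (Fin a) (Fin b) F →ₗ[F] (Fin r ⊕ Fin d → F) :=
      { toFun := fun A x => Φ A (Sum.inl i) x
        map_add' := fun A B => by ext; simp
        map_smul' := fun s A => by ext; simp }
    refine ⟨𝒜 ⊓ LinearMap.ker f, inf_le_left, key b hab _ (by simpa using h5) f, ?_⟩
    rintro A ⟨hA, hf⟩
    obtain ⟨g1, g2⟩ := hcl (Φ A) ⟨A, hA, rfl⟩
    have hf : f A = 0 := hf
    rw [← h3 A]
    have := rank_le_card_of_support_subset (Φ A)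
      ((Finset.univ.erase i).image (Sum.inl : Fin r → Fin r ⊕ Fin c)) ?_
    · refine (Nat.add_le_add_right (this.trans Finset.card_image_le) 1).trans ?_
      rw [Finset.card_erase_of_mem (Finset.mem_univ _), Finset.card_univ, Fintype.card_fin]
      omega
    · rw [Function.support_subset_iff']
      rintro (x | x) hx
      · have : x = i := by
          by_contra hne
          exact hx (by simp [hne])
        subst this
        exact hf
      · ext (y | y)
        · exact congrFun (congrFun g1 x) y
        · exact congrFun (congrFun g2 x) y

lemma top_opt (hab : b ≤ a) : IsOptAnticode (⊤ : Submodule F (Matrix (Fin a) (Fin b) F)) ∧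
    maxrank (⊤ : Submodule F (Matrix (Fin a) (Fin b) F)) = b := by
  have h : maxrank (⊤ : Submodule F (Matrix (Fin a) (Fin b) F)) = b := by
    apply le_antisymm (maxrank_le_width _)
    let M : Matrix (Fin a) (Fin b) F := (1 : Matrix (Fin a) (Fin a) F).submatrix id (Fin.castLE hab)
    have h1 : (M.submatrix (Fin.castLE hab) id) = 1 := by
      ext x y
      simp [M, Matrix.one_apply]
    have h2 := rank_submatrix_le M (Fin.castLE hab) id
    rw [h1, rank_one, Fintype.card_fin] at h2
    exact h2.trans (le_maxrank trivial)
  refine ⟨?_, h⟩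
  unfold IsOptAnticode
  rw [h, finrank_top, Module.finrank_matrix]
  simp

end Shrink

section Codes
set_option linter.unusedSectionVars false

lemma maxsrk_pi (𝒜 : ∀ i : Fin t, Submodule F (Matrix (Fin (m i)) (Fin (n i)) F)) :
    maxsrk (Submodule.pi Set.univ 𝒜) = ∑ i, maxrank (𝒜 i) := by
  have hle : ∀ C ∈ Submodule.pi Set.univ 𝒜, srk C ≤ ∑ i, maxrank (𝒜 i) := fun C hC =>
    Finset.sum_le_sum fun i _ => le_maxrank (hC i trivial)
  unfold maxsrk
  apply le_antisymm
  · refine csSup_le ⟨_, 0, Submodule.zero_mem _, rfl⟩ ?_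
    rintro _ ⟨C, hC, rfl⟩
    exact hle C hC
  · choose C hC hCr using fun i => exists_maxrank (𝒜 i)
    refine le_csSup ⟨∑ i, maxrank (𝒜 i), ?_⟩ ⟨C, fun i _ => hC i, ?_⟩
    · rintro _ ⟨C, hC, rfl⟩
      exact hle C hC
    · exact Finset.sum_congr rfl fun i _ => hCr i

lemma codeWt_exists (hmn : ∀ i, n i ≤ m i)
    (𝒞 : Submodule F (∀ i : Fin t, Matrix (Fin (m i)) (Fin (n i)) F)) :
    ∃ 𝒜 : ∀ i : Fin t, Submodule F (Matrix (Fin (m i)) (Fin (n i)) F),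
    (∀ i, IsOptAnticode (𝒜 i)) ∧ 𝒞 ≤ Submodule.pi Set.univ 𝒜 ∧
      ∑ i, maxrank (𝒜 i) = codeWt 𝒞 := by
  have := Nat.sInf_mem (s := {w | ∃ 𝒜 : ∀ i : Fin t, Submodule F (Matrix (Fin (m i)) (Fin (n i)) F),
    (∀ i, IsOptAnticode (𝒜 i)) ∧ 𝒞 ≤ Submodule.pi Set.univ 𝒜 ∧
      maxsrk (Submodule.pi Set.univ 𝒜) = w})
    ⟨_, fun _ => ⊤, fun i => (top_opt (hmn i)).1, fun _ _ _ _ => trivial, rfl⟩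
  obtain ⟨𝒜, h1, h2, h3⟩ := this
  exact ⟨𝒜, h1, h2, by rw [← maxsrk_pi]; exact h3⟩

lemma codeWt_le {𝒞 : Submodule F (∀ i : Fin t, Matrix (Fin (m i)) (Fin (n i)) F)}
    (𝒜 : ∀ i : Fin t, Submodule F (Matrix (Fin (m i)) (Fin (n i)) F))
    (h1 : ∀ i, IsOptAnticode (𝒜 i)) (h2 : 𝒞 ≤ Submodule.pi Set.univ 𝒜) :
    codeWt 𝒞 ≤ ∑ i, maxrank (𝒜 i) :=
  Nat.sInf_le ⟨𝒜, h1, h2, maxsrk_pi 𝒜⟩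

lemma codeWt_le_sum (hmn : ∀ i, n i ≤ m i)
    (𝒞 : Submodule F (∀ i : Fin t, Matrix (Fin (m i)) (Fin (n i)) F)) :
    codeWt 𝒞 ≤ ∑ i, n i := by
  refine (codeWt_le (fun _ => ⊤) (fun i => (top_opt (hmn i)).1) fun _ _ _ _ => trivial).trans ?_
  exact Finset.sum_le_sum fun i _ => (top_opt (hmn i)).2.le

lemma gw_exists (𝒞 : Submodule F (∀ i : Fin t, Matrix (Fin (m i)) (Fin (n i)) F)) {r : ℕ}
    (hr : r ≤ Module.finrank F 𝒞) : ∃ ℰ ≤ 𝒞, r ≤ Module.finrank F ℰ ∧ codeWt ℰ = gw 𝒞 r := by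
  have := Nat.sInf_mem (s := {w | ∃ 𝒟 : Submodule F (∀ i : Fin t, Matrix (Fin (m i)) (Fin (n i)) F),
    𝒟 ≤ 𝒞 ∧ r ≤ Module.finrank F 𝒟 ∧ codeWt 𝒟 = w}) ⟨_, 𝒞, le_rfl, hr, rfl⟩
  exact this

lemma gw_le {𝒞 ℰ : Submodule F (∀ i : Fin t, Matrix (Fin (m i)) (Fin (n i)) F)} {r : ℕ}
    (h : ℰ ≤ 𝒞) (hr : r ≤ Module.finrank F ℰ) : gw 𝒞 r ≤ codeWt ℰ :=
  Nat.sInf_le ⟨ℰ, h, hr, rfl⟩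

lemma gw_mono {𝒞 : Submodule F (∀ i : Fin t, Matrix (Fin (m i)) (Fin (n i)) F)} {r s : ℕ}
    (h : r ≤ s) (hs : s ≤ Module.finrank F 𝒞) : gw 𝒞 r ≤ gw 𝒞 s := by
  obtain ⟨ℰ, h1, h2, h3⟩ := gw_exists 𝒞 hs
  rw [← h3]
  exact gw_le h1 (h.trans h2)

lemma gw_le_sum (hmn : ∀ i, n i ≤ m i)
    (𝒞 : Submodule F (∀ i : Fin t, Matrix (Fin (m i)) (Fin (n i)) F)) {r : ℕ}
    (hr : r ≤ Module.finrank F 𝒞) : gw 𝒞 r ≤ ∑ i, n i :=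
  (gw_le le_rfl hr).trans (codeWt_le_sum hmn 𝒞)

lemma minDist_le_gw (hmn : ∀ i, n i ≤ m i)
    {𝒞 𝒟 : Submodule F (∀ i : Fin t, Matrix (Fin (m i)) (Fin (n i)) F)} (hsub : 𝒞 ≤ 𝒟) {r : ℕ}
    (hr0 : 0 < r) (hr : r ≤ Module.finrank F 𝒞) : minDist 𝒟 ≤ gw 𝒞 r := by
  obtain ⟨ℰ, h1, h2, h3⟩ := gw_exists 𝒞 hr
  rw [← h3]
  obtain ⟨𝒜, -, g2, g3⟩ := codeWt_exists hmn ℰ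
  have hne : ℰ ≠ ⊥ := by
    rintro rfl
    rw [finrank_bot] at h2
    omega
  obtain ⟨x, hx, hx0⟩ := Submodule.exists_mem_ne_zero_of_ne_bot hne
  rw [← g3]
  have : minDist 𝒟 ≤ srk x := Nat.sInf_le ⟨x, hsub (h1 hx), hx0, rfl⟩
  exact this.trans (Finset.sum_le_sum fun i _ => le_maxrank (g2 hx i trivial))

/-- Maximal dimension of a product anticode of maximum sum-rank `w`. -/
def Mfun (m n : Fin t → ℕ) (w : ℕ) : ℕ := ∑ i, m i * min (n i) (w - ∑ k ∈ Finset.Iio i, n k)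

lemma Mfun_mono (m n : Fin t → ℕ) : Monotone (Mfun m n) := by
  intro a b h
  refine Finset.sum_le_sum fun i _ => Nat.mul_le_mul_left _ ?_
  omega

lemma sum_Iic_eq (n : Fin t → ℕ) (i : Fin t) :
    ∑ k ∈ Finset.Iic i, n k = ∑ k ∈ Finset.Iio i, n k + n i := by
  rw [← Finset.Iio_insert, Finset.sum_insert (by simp), add_comm]

lemma Mfun_succ (hm_mono : ∀ i j : Fin t, i ≤ j → m j ≤ m i) (w : ℕ) (i : Fin t)
    (hi : w < ∑ k ∈ Finset.Iio i, n k + n i) : Mfun m n w + m i ≤ Mfun m n (w + 1) := by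
  classical
  let S := Finset.univ.filter fun i : Fin t => w < ∑ k ∈ Finset.Iio i, n k + n i
  have hS : S.Nonempty := ⟨i, by simp [S, hi]⟩
  let l := S.min' hS
  have hl : w < ∑ k ∈ Finset.Iio l, n k + n l := by
    have := S.min'_mem hS
    simpa [S] using this
  have hli : l ≤ i := S.min'_le i (by simp [S, hi])
  have hlw : ∑ k ∈ Finset.Iio l, n k ≤ w := by
    by_contra hcon
    push Not at hcon
    have hl0 : 0 < l.1 := by
      rcases Nat.eq_zero_or_pos l.1 with h0 | h0
      · have : Finset.Iio l = ∅ := by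
          ext x; simp only [Finset.mem_Iio, Fin.lt_def]; simp [h0]
        rw [this] at hcon
        simp at hcon
      · exact h0
    let l' : Fin t := ⟨l.1 - 1, by omega⟩
    have h1 : Finset.Iio l = Finset.Iic l' := by
      ext x; simp only [Finset.mem_Iio, Finset.mem_Iic, Fin.lt_def, Fin.le_def, l']; omega
    rw [h1, sum_Iic_eq] at hcon
    have := S.min'_le l' (by simp [S, hcon])
    have h2 : l ≤ l' := this
    simp only [Fin.le_def, l'] at h2
    omega
  refine (Nat.add_le_add_left (hm_mono l i hli) _).trans ?_
  unfold Mfun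
  rw [← Finset.add_sum_erase _ _ (Finset.mem_univ l), ← Finset.add_sum_erase _ _ (Finset.mem_univ l)]
  have h1 : min (n l) (w + 1 - ∑ k ∈ Finset.Iio l, n k)
      = min (n l) (w - ∑ k ∈ Finset.Iio l, n k) + 1 := by omega
  rw [h1, mul_add, mul_one]
  have h2 : ∑ x ∈ Finset.univ.erase l, m x * min (n x) (w - ∑ k ∈ Finset.Iio x, n k) ≤
      ∑ x ∈ Finset.univ.erase l, m x * min (n x) (w + 1 - ∑ k ∈ Finset.Iio x, n k) :=
    Finset.sum_le_sum fun i _ => Nat.mul_le_mul_left _ (by omega)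
  omega

lemma exists_block (r : Fin t → ℕ) (hr : ∀ i, r i ≤ n i) (w : ℕ) (hw : ∑ i, r i = w + 1) :
    ∃ i, 0 < r i ∧ w < ∑ k ∈ Finset.Iio i, n k + n i := by
  classical
  let S := Finset.univ.filter fun i : Fin t => 0 < r i
  have hS : S.Nonempty := by
    by_contra hcon
    rw [Finset.not_nonempty_iff_eq_empty, Finset.filter_eq_empty_iff] at hcon
    have : ∑ i, r i = 0 := Finset.sum_eq_zero fun i hi => by
      have := hcon hi; omega
    omega
  let l := S.max' hS
  have hl : 0 < r l := by
    have := S.max'_mem hS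
    simpa [S] using this
  refine ⟨l, hl, ?_⟩
  rw [← sum_Iic_eq]
  have h1 : ∑ i, r i = ∑ i ∈ Finset.Iic l, r i := by
    symm
    apply Finset.sum_subset (Finset.subset_univ _)
    intro x _ hx
    by_contra hcon
    exact hx (Finset.mem_Iic.2 (S.le_max' x (by simp [S]; omega)))
  have h2 : ∑ i ∈ Finset.Iic l, r i ≤ ∑ i ∈ Finset.Iic l, n i :=
    Finset.sum_le_sum fun i _ => hr i
  omega

lemma gw_step (hm_mono : ∀ i j : Fin t, i ≤ j → m j ≤ m i) (hmn : ∀ i, n i ≤ m i)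
    (𝒞 : Submodule F (∀ i : Fin t, Matrix (Fin (m i)) (Fin (n i)) F)) (w r s : ℕ)
    (hs : s ≤ Module.finrank F 𝒞) (hrs : r + Mfun m n (w + 1) ≤ s + Mfun m n w)
    (h : gw 𝒞 s ≤ w + 1) : gw 𝒞 r ≤ w := by
  classical
  obtain ⟨ℰ, h1, h2, h3⟩ := gw_exists 𝒞 hs
  obtain ⟨𝒜, g1, g2, g3⟩ := codeWt_exists hmn ℰ
  have hM := Mfun_mono m n (Nat.le_succ w)
  simp only [Nat.succ_eq_add_one] at hM
  rcases Nat.lt_or_ge w (codeWt ℰ) with hlt | hge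
  swap
  · exact (gw_le h1 (by omega)).trans hge
  have hw : ∑ i, maxrank (𝒜 i) = w + 1 := by omega
  obtain ⟨i, hi1, hi2⟩ := exists_block (fun i => maxrank (𝒜 i)) (fun i => maxrank_le_width _) w hw
  have hMi := Mfun_succ hm_mono w i hi2
  obtain ⟨B, hB, hBopt, hBr⟩ := shrink (hmn i) (𝒜 i) (g1 i) hi1
  let 𝒜' := Function.update 𝒜 i B
  let f := (Submodule.mkQ B).comp (LinearMap.proj (R := F)
    (φ := fun i : Fin t => Matrix (Fin (m i)) (Fin (n i)) F) i)
  have e1 := finrank_map_add_inf_ker f ℰ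
  have e2 : Module.finrank F (ℰ.map f) ≤ Module.finrank F ((𝒜 i).map B.mkQ) := by
    apply Submodule.finrank_mono
    rintro _ ⟨x, hx, rfl⟩
    exact ⟨x i, g2 hx i trivial, rfl⟩
  have e3 := finrank_map_add_inf_ker B.mkQ (𝒜 i)
  rw [Submodule.ker_mkQ, inf_eq_right.2 hB, g1 i, hBopt, ← hBr, mul_add, mul_one] at e3
  have e4 : codeWt (ℰ ⊓ LinearMap.ker f) ≤ ∑ k, maxrank (𝒜' k) := by
    apply codeWt_le
    · intro k
      by_cases hk : k = i
      · subst hk; simpa [𝒜'] using hBopt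
      · simpa [𝒜', hk] using g1 k
    · rintro x ⟨hx, hxf⟩ k _
      by_cases hk : k = i
      · subst hk
        have : f x = 0 := hxf
        simpa [𝒜', f] using this
      · simpa [𝒜', hk] using g2 hx k trivial
  have e5 : ∑ k, maxrank (𝒜' k) = w := by
    rw [← Finset.add_sum_erase _ _ (Finset.mem_univ i)] at hw ⊢
    have : ∑ x ∈ Finset.univ.erase i, maxrank (𝒜' x) = ∑ x ∈ Finset.univ.erase i, maxrank (𝒜 x) :=
      Finset.sum_congr rfl fun k hk => by
        simp [𝒜', Finset.ne_of_mem_erase hk]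
    rw [this]
    have : maxrank (𝒜' i) = maxrank B := by simp [𝒜']
    omega
  rw [← e5]
  exact (gw_le (inf_le_left.trans h1) (by omega)).trans e4

lemma Mfun_top : Mfun m n (∑ i, n i) = ∑ i, m i * n i := by
  refine Finset.sum_congr rfl fun i _ => ?_
  have := sum_Iic_eq n i
  have h2 : ∑ k ∈ Finset.Iic i, n k ≤ ∑ k, n k :=
    Finset.sum_le_sum_of_subset (Finset.subset_univ _)
  rw [min_eq_left (by omega)]

lemma Mfun_at (j : Fin t) (δ : ℕ) (hδ : δ ≤ n j) :
    Mfun m n (∑ i ∈ Finset.Iio j, n i + δ) + ∑ i ∈ Finset.Ici j, m i * n i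
      = ∑ i, m i * n i + δ * m j := by
  have hsplit : ∀ g : Fin t → ℕ, ∑ i, g i = ∑ i ∈ Finset.Iio j, g i + (g j + ∑ i ∈ Finset.Ioi j, g i) := by
    intro g
    have h1 : (Finset.univ : Finset (Fin t)) = Finset.Iio j ∪ Finset.Ici j := by
      ext x; simp [lt_or_ge]
    have h2 : Disjoint (Finset.Iio j) (Finset.Ici j) := by
      rw [Finset.disjoint_left]; intro x hx hx'
      simp at hx hx'; exact absurd hx (not_lt.2 hx')
    rw [h1, Finset.sum_union h2, ← Finset.Ioi_insert j, Finset.sum_insert (by simp)]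
  have h1 : ∑ i ∈ Finset.Iio j, m i * min (n i) (∑ i ∈ Finset.Iio j, n i + δ - ∑ k ∈ Finset.Iio i, n k)
      = ∑ i ∈ Finset.Iio j, m i * n i := by
    refine Finset.sum_congr rfl fun i hi => ?_
    have := sum_Iic_eq n i
    have h2 : ∑ k ∈ Finset.Iic i, n k ≤ ∑ k ∈ Finset.Iio j, n k :=
      Finset.sum_le_sum_of_subset fun x hx => by
        simp at hx hi ⊢; exact lt_of_le_of_lt hx hi
    rw [min_eq_left (by omega)]
  have h2 : ∑ i ∈ Finset.Ioi j, m i * min (n i) (∑ i ∈ Finset.Iio j, n i + δ - ∑ k ∈ Finset.Iio i, n k)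
      = 0 := by
    refine Finset.sum_eq_zero fun i hi => ?_
    have := sum_Iic_eq n j
    have h2 : ∑ k ∈ Finset.Iic j, n k ≤ ∑ k ∈ Finset.Iio i, n k :=
      Finset.sum_le_sum_of_subset fun x hx => by
        simp at hx hi ⊢; exact lt_of_le_of_lt hx hi
    rw [Nat.sub_eq_zero_of_le (by omega)]; simp
  unfold Mfun
  rw [hsplit (fun i => m i * min (n i) (∑ i ∈ Finset.Iio j, n i + δ - ∑ k ∈ Finset.Iio i, n k)),
    hsplit (fun i => m i * n i), h1, h2, ← Finset.Ioi_insert j, Finset.sum_insert (by simp),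
    Nat.add_sub_cancel_left, min_eq_right hδ, mul_comm δ]
  omega

/-- Abstract combinatorial statement. -/
lemma subseq_abstract (k K N d0 : ℕ) (M : ℕ → ℕ) (hM : Monotone M) (d e : ℕ → ℕ)
    (hK : K + M d0 = M N)
    (hd_mono : ∀ r s, r ≤ s → s ≤ k → d r ≤ d s)
    (hd_lo : ∀ r, 0 < r → r ≤ k → d0 + 1 ≤ d r) (hd_hi : ∀ r, r ≤ k → d r ≤ N)
    (hd_step : ∀ w r s, s ≤ k → r + M (w + 1) ≤ s + M w → d s ≤ w + 1 → d r ≤ w)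
    (he_lo : ∀ r, 0 < r → r ≤ K → d0 + 1 ≤ e r) (he_hi : ∀ r, r ≤ K → e r ≤ N)
    (he_step : ∀ w r s, s ≤ K → r + M (w + 1) ≤ s + M w → e s ≤ w + 1 → e r ≤ w) :
    IsSubseq (fun r : Fin k => d (r.1 + 1)) (fun r : Fin K => e (r.1 + 1)) := by
  classical
  -- explicit values of `e`
  have hup : ∀ c w, w + c = N → d0 ≤ w → ∀ r, r ≤ K → r + M d0 ≤ M w → e r ≤ w := by
    intro c
    induction c with
    | zero => intro w hw _ r hr _; rw [add_zero] at hw; rw [hw]; exact he_hi r hr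
    | succ c ih =>
      intro w hw hw0 r hr hrw
      have h1 := hM (Nat.le_succ w)
      have h2 := hM (show w + 1 ≤ N by omega)
      simp only [Nat.succ_eq_add_one] at h1
      refine he_step w r (M (w + 1) - M d0) (by omega) (by omega) ?_
      exact ih (w + 1) (by omega) (by omega) _ (by omega) (by omega)
  have hlow : ∀ c r, 0 < r → r ≤ K → M (d0 + c) < r + M d0 → d0 + c < e r := by
    intro c
    induction c with
    | zero => intro r h0 hr _; exact he_lo r h0 hr
    | succ c ih =>
      intro r h0 hr hrw
      by_contra hcon
      push Not at hcon
      have h1 := hM (Nat.le_succ (d0 + c))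
      have h3 := hM (Nat.le_add_right d0 c)
      simp only [Nat.succ_eq_add_one] at h1
      rw [← add_assoc] at hrw hcon
      have h2 := he_step (d0 + c) (r + M (d0 + c) - M (d0 + c + 1)) r hr (by omega) hcon
      have := ih (r + M (d0 + c) - M (d0 + c + 1)) (by omega) (by omega) (by omega)
      omega
  have hval : ∀ w r, 0 < r → r ≤ K → d0 + 1 ≤ w → w ≤ N → M (w - 1) < r + M d0 →
      r + M d0 ≤ M w → e r = w := by
    intro w r h0 hr hw1 hw2 h1 h2
    apply le_antisymm
    · exact hup (N - w) w (by omega) (by omega) r hr h2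
    · have := hlow (w - 1 - d0) r h0 hr (by rwa [show d0 + (w - 1 - d0) = w - 1 by omega])
      omega
  -- first index with given value
  have hex : ∀ r : Fin k, ∃ s, 0 < s ∧ d s = d (r.1 + 1) := fun r => ⟨r.1 + 1, by omega, rfl⟩
  let g : Fin k → ℕ := fun r => Nat.find (hex r)
  have hg : ∀ r, 0 < g r ∧ d (g r) = d (r.1 + 1) := fun r => Nat.find_spec (hex r)
  have hgle : ∀ r, g r ≤ r.1 + 1 := fun r => Nat.find_min' (hex r) ⟨by omega, rfl⟩
  have hgbd : ∀ r : Fin k, r.1 + 1 + M (d (r.1 + 1) - 1) < g r + M (d (r.1 + 1)) := by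
    intro r
    by_contra hcon
    push Not at hcon
    have h0 := hd_lo (r.1 + 1) (by omega) (by omega)
    have h1 := hd_step (d (r.1 + 1) - 1) (g r) (r.1 + 1) (by omega)
      (by rw [Nat.sub_add_cancel (by omega)]; exact hcon) (by omega)
    rw [(hg r).2] at h1
    omega
  have hlo : ∀ r : Fin k, M d0 ≤ M (d (r.1 + 1) - 1) := fun r =>
    hM (by have := hd_lo (r.1 + 1) (by omega) (by omega); omega)
  have hhi : ∀ r : Fin k, M (d (r.1 + 1)) ≤ M N := fun r => hM (hd_hi _ (by omega))
  let φ : Fin k → Fin K := fun r => ⟨M (d (r.1 + 1) - 1) - M d0 + (r.1 + 1 - g r), by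
    have := hgbd r; have := hlo r; have := hhi r; have := hgle r; omega⟩
  refine ⟨φ, ?_, ?_⟩
  · intro r s hrs
    have hrs' : r.1 < s.1 := hrs
    change M (d (r.1 + 1) - 1) - M d0 + (r.1 + 1 - g r) < M (d (s.1 + 1) - 1) - M d0 + (s.1 + 1 - g s)
    have h1 := hd_mono (r.1 + 1) (s.1 + 1) (by omega) (by omega)
    rcases Nat.eq_or_lt_of_le h1 with h2 | h2
    · have hgg : g r = g s := by
        apply le_antisymm
        · exact Nat.find_min' (hex r) ⟨(hg s).1, by rw [(hg s).2, h2]⟩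
        · exact Nat.find_min' (hex s) ⟨(hg r).1, by rw [(hg r).2, h2]⟩
      rw [h2, hgg]
      have := hgle r
      omega
    · have h3 := hM (show d (r.1 + 1) ≤ d (s.1 + 1) - 1 by omega)
      have := hgbd r; have := hlo r; have := hlo s; have := hgle r
      omega
  · intro r
    have := hgbd r; have := hlo r; have := hhi r; have := hgle r
    symm
    refine hval (d (r.1 + 1)) _ (by omega) (φ r).2 (hd_lo _ (by omega) (by omega))
      (hd_hi _ (by omega)) ?_ ?_
    · simp only [φ]; omega
    · simp only [φ]; omega

end Codes

/-- If `𝒞 ⊆ 𝒟 ⊆ 𝕄` with `𝒞 ≠ 0` and `𝒟` MSRD, then the sequence of generalized sum-rank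
weights of `𝒞` is a subsequence of the sequence of generalized sum-rank weights of `𝒟`. -/
theorem gw_subseq_of_MSRD (ht : 0 < t)
    (hm_mono : ∀ i j : Fin t, i ≤ j → m j ≤ m i)
    (hn_pos : ∀ i, 0 < n i) (hmn : ∀ i, n i ≤ m i)
    (𝒞 𝒟 : Submodule F (∀ i : Fin t, Matrix (Fin (m i)) (Fin (n i)) F))
    (h𝒞 : 𝒞 ≠ ⊥) (hsub : 𝒞 ≤ 𝒟) (hMSRD : IsMSRD 𝒟) :
    IsSubseq (fun r : Fin (Module.finrank F 𝒞) => gw 𝒞 (r.1 + 1))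
      (fun r : Fin (Module.finrank F 𝒟) => gw 𝒟 (r.1 + 1)) := by
  obtain ⟨j, δ, h1, h2, h3⟩ := hMSRD
  have hM1 := Mfun_at (m := m) (n := n) j δ (by omega)
  have hM2 := Mfun_top (m := m) (n := n)
  refine subseq_abstract (Module.finrank F 𝒞) (Module.finrank F 𝒟) (∑ i, n i)
    (∑ i ∈ Finset.Iio j, n i + δ) (Mfun m n) (Mfun_mono m n) (gw 𝒞) (gw 𝒟) ?_ ?_ ?_ ?_ ?_ ?_ ?_ ?_
  · omega
  · intro r s hrs hs
    exact gw_mono hrs hs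
  · intro r h0 hr
    rw [← h2]
    exact minDist_le_gw hmn hsub h0 hr
  · intro r hr
    exact gw_le_sum hmn 𝒞 hr
  · intro w r s hs hrs h
    exact gw_step hm_mono hmn 𝒞 w r s hs hrs h
  · intro r h0 hr
    rw [← h2]
    exact minDist_le_gw hmn le_rfl h0 hr
  · intro r hr
    exact gw_le_sum hmn 𝒟 hr
  · intro w r s hs hrs h
    exact gw_step hm_mono hmn 𝒟 w r s hs hrs h
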